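/- Let A be a finite set of arc labels. For every n ≥ 1 there exists an injective function from the set of labeled projective dependency trees on n words with labels in A (a projective dependency tree together with a function assigning an element of A to every non-root position) into the set of lists of length 2n − 1 over a tag alphabet of cardinality exactly 2·|A| + 4 (terminal tags paired with an arc label, plus the four nonterminal tags). -/

import Mathlib

/-- Binary head trees (BHTs). -/
inductive BHT : Type where
  | leaf : BHT
  | nodeL (l r : BHT) : BHT
  | nodeR (l r : BHT) : BHT

/-- Number of leaves of a BHT. -/
def BHT.numLeaves : BHT → ℕ
  | .leaf => 1
  | .nodeL l r => l.numLeaves + r.numLeaves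
  | .nodeR l r => l.numLeaves + r.numLeaves

/-- Head position of a BHT whose span of leaf positions starts at `i`. -/
def BHT.headAt : BHT → ℕ → ℕ
  | .leaf, i => i
  | .nodeL l _, i => l.headAt i
  | .nodeR l r, i => r.headAt (i + l.numLeaves)

/-- Head position of a BHT placed over positions `0, …, numLeaves - 1`. -/
def BHT.head (T : BHT) : ℕ := T.headAt 0

/-- Arc set of a BHT whose span of leaf positions starts at `i`. -/
def BHT.arcsAt : BHT → ℕ → Set (ℕ × ℕ)
  | .leaf, _ => ∅
  | .nodeL l r, i =>
      insert (l.headAt i, r.headAt (i + l.numLeaves)) (l.arcsAt i ∪ r.arcsAt (i + l.numLeaves))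
  | .nodeR l r, i =>
      insert (r.headAt (i + l.numLeaves), l.headAt i) (l.arcsAt i ∪ r.arcsAt (i + l.numLeaves))

/-- Arc set of a BHT placed over positions `0, …, numLeaves - 1`. -/
def BHT.arcs (T : BHT) : Set (ℕ × ℕ) := T.arcsAt 0

/-- `S` is a subtree of `T` (placed over positions `0, …, numLeaves - 1`) whose
leaf span starts at absolute position `i`. -/
inductive BHT.SubtreeAt : BHT → ℕ → BHT → Prop
  | refl (T : BHT) : BHT.SubtreeAt T 0 T
  | inlL (l r S : BHT) (i : ℕ) : BHT.SubtreeAt l i S → BHT.SubtreeAt (BHT.nodeL l r) i S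
  | inrL (l r S : BHT) (i : ℕ) :
      BHT.SubtreeAt r i S → BHT.SubtreeAt (BHT.nodeL l r) (l.numLeaves + i) S
  | inlR (l r S : BHT) (i : ℕ) : BHT.SubtreeAt l i S → BHT.SubtreeAt (BHT.nodeR l r) i S
  | inrR (l r S : BHT) (i : ℕ) :
      BHT.SubtreeAt r i S → BHT.SubtreeAt (BHT.nodeR l r) (l.numLeaves + i) S

/-- `bht2dep T j = some i` if `i` is the unique position with `(i, j) ∈ arcs T`,
and `none` if `j` has no incoming arc. -/
noncomputable def bht2dep (n : ℕ) (T : BHT) : Fin n → Option (Fin n) := fun j =>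
  letI := Classical.dec (∃! i : Fin n, ((i : ℕ), (j : ℕ)) ∈ T.arcs)
  if h : ∃! i : Fin n, ((i : ℕ), (j : ℕ)) ∈ T.arcs then some h.choose else none

/-- `head` is a dependency tree on `n` words: exactly one root (position with
`head r = none`), and every position reaches the root by iterating `head`. -/
def IsDepTree {n : ℕ} (head : Fin n → Option (Fin n)) : Prop :=
  ∃ r : Fin n, head r = none ∧ (∀ r' : Fin n, head r' = none → r' = r) ∧
    ∀ j : Fin n, Relation.ReflTransGen (fun a b => head a = some b) j r

/-- A dependency tree is projective if every position's set of descendants is an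
interval of consecutive positions. -/
def Projective {n : ℕ} (head : Fin n → Option (Fin n)) : Prop :=
  ∀ i : Fin n, ∃ a b : Fin n,
    ∀ j : Fin n, Relation.ReflTransGen (fun x y => head x = some y) j i ↔ (a ≤ j ∧ j ≤ b)

/-- The six hexatags: `tL`/`tR` are terminal tags (leaf that is a left/right child);
`leftL`/`leftR` are `⇐L`/`⇐R` (internal left child with head-label L/R);
`rightL`/`rightR` are `⇒L`/`⇒R` (internal right child with head-label L/R). -/
inductive Hexatag : Type where
  | tL | tR | leftL | leftR | rightL | rightR
deriving DecidableEq

/-- A hexatag is terminal if it is `tL` or `tR`. -/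
def Hexatag.isTerminal : Hexatag → Prop
  | .tL => True
  | .tR => True
  | _ => False

/-- In-order linearization; the Boolean records whether the current subtree is a
right child of its parent (the root counts as a left child by convention). -/
def BHT.hexatagsAux : BHT → Bool → List Hexatag
  | .leaf, false => [.tL]
  | .leaf, true => [.tR]
  | .nodeL l r, b =>
      l.hexatagsAux false ++ (if b then Hexatag.rightL else Hexatag.leftL) :: r.hexatagsAux true
  | .nodeR l r, b =>
      l.hexatagsAux false ++ (if b then Hexatag.rightR else Hexatag.leftR) :: r.hexatagsAux true

/-- The hexatag linearization of a BHT. -/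
def BHT.hexatags (T : BHT) : List Hexatag := T.hexatagsAux false

/-- The tags emitted for the leaves of a BHT, in left-to-right order. -/
def BHT.leafTagsAux : BHT → Bool → List Hexatag
  | .leaf, false => [.tL]
  | .leaf, true => [.tR]
  | .nodeL l r, _ => l.leafTagsAux false ++ r.leafTagsAux true
  | .nodeR l r, _ => l.leafTagsAux false ++ r.leafTagsAux true

/-- The tags emitted for the leaves of a BHT in left-to-right order (root
counts as a left child by convention). -/
def BHT.leafTags (T : BHT) : List Hexatag := T.leafTagsAux false

/-- Partial BHTs: binary head trees possibly containing a dummy placeholder. -/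
inductive PBHT : Type where
  | dummy : PBHT
  | leaf : PBHT
  | nodeL (l r : PBHT) : PBHT
  | nodeR (l r : PBHT) : PBHT
deriving DecidableEq

/-- Does a partial BHT contain a dummy? -/
def PBHT.hasDummy : PBHT → Bool
  | .dummy => true
  | .leaf => false
  | .nodeL l r => l.hasDummy || r.hasDummy
  | .nodeR l r => l.hasDummy || r.hasDummy

/-- Substitute `u` for the dummy in a partial BHT. -/
def PBHT.subst : PBHT → PBHT → PBHT
  | .dummy, u => u
  | .leaf, _ => .leaf
  | .nodeL l r, u => .nodeL (l.subst u) (r.subst u)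
  | .nodeR l r, u => .nodeR (l.subst u) (r.subst u)

/-- One step of the left-corner decoder on a stack of partial BHTs. -/
def hexStep : List PBHT → Hexatag → Option (List PBHT)
  | st, .tL => some (.leaf :: st)
  | t :: st, .tR => if t.hasDummy then some (t.subst .leaf :: st) else none
  | t :: st, .leftL => some (.nodeL t .dummy :: st)
  | t :: st, .leftR => some (.nodeR t .dummy :: st)
  | t :: u :: st, .rightL =>
      if u.hasDummy then some (u.subst (.nodeL t .dummy) :: st) else none
  | t :: u :: st, .rightR =>
      if u.hasDummy then some (u.subst (.nodeR t .dummy) :: st) else none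
  | _, _ => none

/-- The left-corner decoder: run the stack operations; succeed iff every
operation is defined and the final stack is a single dummy-free tree. -/
def tags2bht (τ : List Hexatag) : Option PBHT :=
  match τ.foldlM hexStep ([] : List PBHT) with
  | some [t] => if t.hasDummy then none else some t
  | _ => none

/-- Embedding of BHTs into partial BHTs. -/
def BHT.toPBHT : BHT → PBHT
  | .leaf => .leaf
  | .nodeL l r => .nodeL l.toPBHT r.toPBHT
  | .nodeR l r => .nodeR l.toPBHT r.toPBHT

/-- Stack-count increment of a hexatag. -/
def Hexatag.delta : Hexatag → ℤ
  | .tL => 1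
  | .tR => 0
  | .leftL => 0
  | .leftR => 0
  | .rightL => -1
  | .rightR => -1

/-- Running stack count `sₖ` after the first `k` tags of `τ`. -/
def stackCount (τ : List Hexatag) (k : ℕ) : ℤ :=
  ((τ.take k).map Hexatag.delta).sum

/-- Validity of a hexatag list (0-indexed: Lean index `k` is 1-indexed position `k+1`). -/
def ValidTags (τ : List Hexatag) : Prop :=
  (τ.length % 2 = 1 ∧
    ∀ k : ℕ, ∀ t : Hexatag, τ[k]? = some t →
      (k % 2 = 0 → t.isTerminal) ∧ (k % 2 = 1 → ¬ t.isTerminal)) ∧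
  τ[0]? = some Hexatag.tL ∧
  (∀ k : ℕ, ∀ t : Hexatag, τ[k]? = some t →
    (t = Hexatag.rightL ∨ t = Hexatag.rightR) → 2 ≤ stackCount τ k) ∧
  stackCount τ τ.length = 1

section Helpers

/-- `x` reaches `y` by iterating `h`. -/
def EncReach {n : ℕ} (h : Fin n → Option (Fin n)) (x y : Fin n) : Prop :=
  Relation.ReflTransGen (fun a b => h a = some b) x y

theorem enc_acyclic {n : ℕ} {h : Fin n → Option (Fin n)} (ht : IsDepTree h) {x y : Fin n}
    (hxy : h x = some y) (hyx : EncReach h y x) : False := by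
  obtain ⟨r, hr, -, hreach⟩ := ht
  have key : ∀ z, EncReach h x z → EncReach h z x := by
    intro z hz
    induction hz with
    | refl => exact Relation.ReflTransGen.refl
    | tail _ hstep ih =>
      rcases Relation.ReflTransGen.cases_head ih with heq | ⟨w, hw, hwx⟩
      · subst heq
        rw [hxy] at hstep
        cases hstep
        exact hyx
      · rw [hstep] at hw
        cases hw
        exact hwx
  rcases Relation.ReflTransGen.cases_head (key r (hreach x)) with heq | ⟨w, hw, _⟩
  · subst heq
    rw [hr] at hxy
    cases hxy
  · rw [hr] at hw
    cases hw

theorem enc_antisymm {n : ℕ} {h : Fin n → Option (Fin n)} (ht : IsDepTree h) {x y : Fin n}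
    (hxy : EncReach h x y) (hyx : EncReach h y x) : x = y := by
  rcases Relation.ReflTransGen.cases_head hxy with heq | ⟨w, hw, hwy⟩
  · exact heq
  · exact (enc_acyclic ht hw (Relation.ReflTransGen.trans hwy hyx)).elim

/-- Descendant sets are order-convex. -/
theorem enc_convex {n : ℕ} {h : Fin n → Option (Fin n)} (hp : Projective h) {x y z i : Fin n}
    (hx : EncReach h x i) (hz : EncReach h z i) (hxy : x ≤ y) (hyz : y ≤ z) :
    EncReach h y i := by
  obtain ⟨a, b, hab⟩ := hp i
  exact (hab y).2 ⟨((hab x).1 hx).1.trans hxy, hyz.trans ((hab z).1 hz).2⟩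

/-- No crossing, abstract form. -/
theorem enc_noncross {n : ℕ} {h : Fin n → Option (Fin n)} (ht : IsDepTree h)
    {j b c : Fin n} (hjb : j ≠ b) (hbc : b ≠ c) (hj : h j = some c)
    (h1 : EncReach h j b) (h2 : EncReach h b c) : False := by
  rcases Relation.ReflTransGen.cases_head h1 with heq | ⟨w, hw, hwb⟩
  · exact hjb heq
  · rw [hj] at hw
    cases hw
    exact hbc (enc_antisymm ht h2 hwb)

/-- Left children of `b`. -/
def encLeft {n : ℕ} (h : Fin n → Option (Fin n)) (b : Fin n) : Finset (Fin n) :=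
  Finset.univ.filter fun i => h i = some b ∧ i < b

/-- Other children of `b`. -/
def encRight {n : ℕ} (h : Fin n → Option (Fin n)) (b : Fin n) : Finset (Fin n) :=
  Finset.univ.filter fun i => h i = some b ∧ ¬ i < b

theorem enc_exists {α : Type*} {S T : Finset α} (hc : S.card = T.card) {j : α}
    (hS : j ∈ S) (hT : j ∉ T) : ∃ d ∈ T, d ∉ S := by
  by_contra hcon
  push Not at hcon
  have : T = S := Finset.eq_of_subset_of_card_le hcon hc.le
  exact hT (this ▸ hS)

theorem enc_step {n : ℕ} {h h' : Fin n → Option (Fin n)} (ht : IsDepTree h)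
    (ht' : IsDepTree h') (hp' : Projective h')
    (hL : ∀ b, (encLeft h b).card = (encLeft h' b).card)
    (hR : ∀ b, (encRight h b).card = (encRight h' b).card)
    (hdir : ∀ j b, h j = some b → ∃ c, h' j = some c ∧ (j < b ↔ j < c))
    (j b : Fin n) (hj : h j = some b)
    (ih : ∀ i c : Fin n, Nat.dist i c < Nat.dist j b → (h i = some c ↔ h' i = some c)) :
    h' j = some b := by
  obtain ⟨c, hc, hjc⟩ := hdir j b hj
  by_contra hne
  have hcb : b ≠ c := by rintro rfl; exact hne hc
  have hjb : j ≠ b := by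
    rintro rfl
    exact enc_acyclic ht hj Relation.ReflTransGen.refl
  have hjc' : j ≠ c := by
    rintro rfl
    exact enc_acyclic ht' hc Relation.ReflTransGen.refl
  have hfar : ¬ Nat.dist j c < Nat.dist j b := by
    intro hlt
    have := (ih j c hlt).2 hc
    rw [hj] at this
    exact hcb (Option.some.inj this)
  have rj : EncReach h' j c := Relation.ReflTransGen.single hc
  have rc : EncReach h' c c := Relation.ReflTransGen.refl
  have rb : EncReach h' b b := Relation.ReflTransGen.refl
  by_cases hlt : j < b
  · have hlt' := hjc.1 hlt
    obtain ⟨d, hd, hd'⟩ := enc_exists (hL b) (j := j) (by simp [encLeft, hj, hlt])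
      (by simp [encLeft, hne])
    simp only [encLeft, Finset.mem_filter, Finset.mem_univ, true_and, not_and] at hd hd'
    have hdfar : ¬ Nat.dist d b < Nat.dist j b := fun hl => hd' ((ih d b hl).2 hd.1) hd.2
    have rd : EncReach h' d b := Relation.ReflTransGen.single hd.1
    simp only [Nat.dist] at hfar hdfar
    have := hd.2
    exact enc_noncross ht' hjb hcb hc
      (enc_convex hp' rd rb (by omega) (by omega))
      (enc_convex hp' rj rc (by omega) (by omega))
  · have hlt' : ¬ j < c := fun hl => hlt (hjc.2 hl)
    obtain ⟨d, hd, hd'⟩ := enc_exists (hR b) (j := j) (by simp [encRight, hj, not_lt.1 hlt])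
      (by simp [encRight, hne])
    simp only [encRight, Finset.mem_filter, Finset.mem_univ, true_and, not_and] at hd hd'
    have hdfar : ¬ Nat.dist d b < Nat.dist j b := fun hl => hd' ((ih d b hl).2 hd.1) hd.2
    have rd : EncReach h' d b := Relation.ReflTransGen.single hd.1
    simp only [Nat.dist] at hfar hdfar
    have := hd.2
    exact enc_noncross ht' hjb hcb hc
      (enc_convex hp' rb rd (by omega) (by omega))
      (enc_convex hp' rc rj (by omega) (by omega))

theorem enc_unique {n : ℕ} {h h' : Fin n → Option (Fin n)} (ht : IsDepTree h)
    (ht' : IsDepTree h') (hp : Projective h) (hp' : Projective h')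
    (hL : ∀ b, (encLeft h b).card = (encLeft h' b).card)
    (hR : ∀ b, (encRight h b).card = (encRight h' b).card)
    (hdir : ∀ j b, h j = some b → ∃ c, h' j = some c ∧ (j < b ↔ j < c))
    (hdir' : ∀ j b, h' j = some b → ∃ c, h j = some c ∧ (j < b ↔ j < c)) : h = h' := by
  have key : ∀ N, ∀ i c : Fin n, Nat.dist i c < N → (h i = some c ↔ h' i = some c) := by
    intro N
    induction N with
    | zero => intro i c hl; omega
    | succ N ih =>
      intro i c hl
      exact ⟨fun hi => enc_step ht ht' hp' hL hR hdir i c hi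
          (fun x y hxy => ih x y (by omega)),
        fun hi => enc_step ht' ht hp (fun b => (hL b).symm) (fun b => (hR b).symm) hdir' i c hi
          (fun x y hxy => (ih x y (by omega)).symm)⟩
  funext j
  exact Option.ext fun b => key (Nat.dist j b + 1) j b (Nat.lt_succ_self _)

/-- Direction-and-label string. -/
def encDir {n : ℕ} {A : Type} (h : Fin n → Option (Fin n)) (l : Fin n → Option A) :
    Fin n → Option (A × Bool) := fun j =>
  (h j).bind fun b => (l j).map fun a => (a, decide (j < b))

/-- Head and direction of a position. -/
def encArc {n : ℕ} (h : Fin n → Option (Fin n)) (j : Fin n) : Fin n × Bool :=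
  (((h j).getD j), decide (j < (h j).getD j))

/-- The multiset of (head, direction) pairs over all non-root positions. -/
def encArcs {n : ℕ} (h : Fin n → Option (Fin n)) : Multiset (Fin n × Bool) :=
  (Finset.univ.filter fun j => h j ≠ none).val.map (encArc h)

theorem encArcs_card {n : ℕ} {h : Fin n → Option (Fin n)} (ht : IsDepTree h) :
    (encArcs h).card = n - 1 := by
  obtain ⟨r, hr, hu, -⟩ := ht
  have : (Finset.univ.filter fun j => h j ≠ none) = Finset.univ.erase r := by
    ext j
    simp only [Finset.mem_filter, Finset.mem_univ, true_and, Finset.mem_erase, and_true]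
    exact not_congr ⟨hu j, fun e => e ▸ hr⟩
  rw [encArcs, this, Multiset.card_map, Finset.card_val, Finset.card_erase_of_mem (Finset.mem_univ r)]
  simp

theorem encArcs_count_left {n : ℕ} (h : Fin n → Option (Fin n)) (b : Fin n) :
    (encArcs h).count (b, true) = (encLeft h b).card := by
  rw [encArcs, Multiset.count_map, ← Finset.filter_val, Finset.card_val]
  congr 1
  ext j
  cases hj : h j <;> simp [encLeft, encArc, hj]
  grind

theorem encArcs_count_right {n : ℕ} (h : Fin n → Option (Fin n)) (b : Fin n) :
    (encArcs h).count (b, false) = (encRight h b).card := by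
  rw [encArcs, Multiset.count_map, ← Finset.filter_val, Finset.card_val]
  congr 1
  ext j
  cases hj : h j <;> simp [encRight, encArc, hj]
  grind

theorem encDir_spec {n : ℕ} {A : Type} {h h' : Fin n → Option (Fin n)} {l l' : Fin n → Option A}
    (hl : ∀ j, h j = none ↔ l j = none) (e : encDir h l = encDir h' l') (j b : Fin n)
    (hj : h j = some b) : ∃ c, h' j = some c ∧ (j < b ↔ j < c) ∧ l j = l' j := by
  have e := congrFun e j
  have h0 := hl j
  cases hlj : l j with
  | none => simp [hj, hlj] at h0
  | some a =>
    cases hc : h' j with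
    | none => simp [encDir, hj, hlj, hc] at e
    | some c =>
      cases hlj' : l' j with
      | none => simp [encDir, hj, hlj, hc, hlj'] at e
      | some a' =>
        simp [encDir, hj, hlj, hc, hlj'] at e
        exact ⟨c, rfl, e.2, by rw [e.1]⟩

theorem enc_bound (k n : ℕ) (hn : 2 ≤ n) :
    (2 * k + 1) ^ n * 2 ^ (3 * n - 2) ≤ (2 * k + 4) ^ (2 * n - 1) := by
  obtain ⟨m, rfl⟩ := Nat.exists_eq_add_of_le hn
  clear hn
  have e1 : 3 * (2 + m) - 2 = 3 * m + 4 := by omega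
  have e2 : 2 * (2 + m) - 1 = 2 * m + 3 := by omega
  rw [e1, e2]
  induction m with
  | zero =>
    zify
    norm_num
    have hk : (0 : ℤ) ≤ k := by positivity
    nlinarith [mul_nonneg hk (sq_nonneg ((k : ℤ) - 1))]
  | succ m ih =>
    have h8 : (2 * k + 1) * 8 ≤ (2 * k + 4) ^ 2 := by nlinarith
    calc (2 * k + 1) ^ (2 + (m + 1)) * 2 ^ (3 * (m + 1) + 4)
        = ((2 * k + 1) ^ (2 + m) * 2 ^ (3 * m + 4)) * ((2 * k + 1) * 8) := by ring
      _ ≤ (2 * k + 4) ^ (2 * m + 3) * (2 * k + 4) ^ 2 :=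
          Nat.mul_le_mul (ih (by omega) (by omega)) h8
      _ = _ := by ring

end Helpers

theorem labeled_injective_encoding (A : Type) [Fintype A] (n : ℕ) (hn : 1 ≤ n) :
    Fintype.card ((Bool × A) ⊕ Fin 4) = 2 * Fintype.card A + 4 ∧
    ∃ f : {p : (Fin n → Option (Fin n)) × (Fin n → Option A) //
            IsDepTree p.1 ∧ Projective p.1 ∧ ∀ j : Fin n, (p.1 j = none ↔ p.2 j = none)} →
          {l : List ((Bool × A) ⊕ Fin 4) // l.length = 2 * n - 1},
      Function.Injective f := by
  classical
  refine ⟨by simp [Fintype.card_sum, Fintype.card_prod], ?_⟩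
  rcases Nat.lt_or_ge n 2 with h2 | h2
  · obtain rfl : n = 1 := by omega
    refine ⟨fun _ => ⟨[Sum.inr 0], rfl⟩, ?_⟩
    rintro ⟨⟨h, l⟩, ⟨r, hr, -, -⟩, -, hl⟩ ⟨⟨h', l'⟩, ⟨r', hr', -, -⟩, -, hl'⟩ -
    simp only [Subtype.mk.injEq, Prod.mk.injEq]
    dsimp only at *
    have a1 : ∀ j, h j = none := fun j => by rw [Subsingleton.elim j r]; exact hr
    have a2 : ∀ j, h' j = none := fun j => by rw [Subsingleton.elim j r']; exact hr'
    exact ⟨funext fun j => by rw [a1, a2],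
      funext fun j => by rw [(hl j).1 (a1 j), (hl' j).1 (a2 j)]⟩
  · let X := {p : (Fin n → Option (Fin n)) × (Fin n → Option A) //
            IsDepTree p.1 ∧ Projective p.1 ∧ ∀ j : Fin n, (p.1 j = none ↔ p.2 j = none)}
    let g : X → (Fin n → Option (A × Bool)) × Sym (Fin n × Bool) (n - 1) := fun p =>
      (encDir p.1.1 p.1.2, ⟨encArcs p.1.1, encArcs_card p.2.1⟩)
    have hg : Function.Injective g := by
      rintro ⟨⟨h, l⟩, ht, hp, hl⟩ ⟨⟨h', l'⟩, ht', hp', hl'⟩ e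
      dsimp only at ht hp hl ht' hp' hl'
      have e1 : encDir h l = encDir h' l' := congrArg Prod.fst e
      have e2 : encArcs h = encArcs h' := congrArg (fun q => q.2.1) e
      have hh : h = h' := by
        refine enc_unique ht ht' hp hp' (fun b => ?_) (fun b => ?_) (fun j b hj => ?_)
          (fun j b hj => ?_)
        · rw [← encArcs_count_left, ← encArcs_count_left, e2]
        · rw [← encArcs_count_right, ← encArcs_count_right, e2]
        · obtain ⟨c, hc, hd, -⟩ := encDir_spec hl e1 j b hj
          exact ⟨c, hc, hd⟩
        · obtain ⟨c, hc, hd, -⟩ := encDir_spec hl' e1.symm j b hj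
          exact ⟨c, hc, hd⟩
      subst hh
      have hll : l = l' := by
        funext j
        cases hj : h j with
        | none => rw [(hl j).1 hj, (hl' j).1 hj]
        | some b =>
          obtain ⟨_, _, _, hlab⟩ := encDir_spec hl e1 j b hj
          exact hlab
      subst hll
      rfl
    have hcard : Fintype.card ((Fin n → Option (A × Bool)) × Sym (Fin n × Bool) (n - 1)) ≤
        Fintype.card (List.Vector ((Bool × A) ⊕ Fin 4) (2 * n - 1)) := by
      rw [card_vector, Fintype.card_prod, Sym.card_sym_eq_choose]
      simp only [Fintype.card_fun, Fintype.card_option, Fintype.card_prod, Fintype.card_sum,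
        Fintype.card_bool, Fintype.card_fin]
      refine le_trans (Nat.mul_le_mul ?_ ?_) (enc_bound (Fintype.card A) n h2)
      · rw [mul_comm]
      · have : n * 2 + (n - 1) - 1 = 3 * n - 2 := by omega
        rw [this]
        exact Nat.choose_le_two_pow _ _
    obtain ⟨φ⟩ := Function.Embedding.nonempty_of_card_le hcard
    exact ⟨fun p => φ (g p), φ.injective.comp hg⟩
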